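/- Let (Q, Σ) be a DFA with n = |Q| satisfying hypothesis (H), and suppose there exists a word u over Σ with |Qu| ≤ n − 3. Let p₁ ≠ p₂ be states, b, a, d ∈ Σ letters, and q ∈ Q∖{p₁, p₂} a state such that: Qb = Q∖{p₁}, p₁b = p₂b, Qa = Q, p₁a = p₂, qb ≠ p₁, Q(bad) = Q∖{q}, Q(badb) = Q∖{p₁, qb}, and, writing X = {p₁, p₁a, p₁a², …} for the orbit of p₁ under a, either (|X| ≥ 3 and d = a) or (|X| = 2, Qd = Q, p₁d = p₁, and there exists p₃ ∈ Q∖{p₁, p₂} with p₃d = p₂). If there is no word v over Σ with |v| ≤ 5 and |Q(badb·v)| ≤ n − 3, then |Q(ba³ba³b)| = n − 3, where ba³ba³b denotes the word b,a,a,a,b,a,a,a,b. -/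

import Mathlib

/-- The image of a finite set of states `R` under a word (list of letters),
where each letter `s` acts on states via `act s`. -/
def wordImage {Q A : Type*} [DecidableEq Q] (act : A → Q → Q) (R : Finset Q) :
    List A → Finset Q
  | [] => R
  | s :: w => wordImage act (R.image (act s)) w

/-!
Write `n = |Q|` and `r = qb`, and call a pair of states safe to depth `k` if no word of length at
most `k` shrinks its complement to `n - 3` states. The pair `{p₁, r}` is safe to depth `5`.
Permutations transport safe pairs, `b` turns a safe pair `{p₁, y}` or `{p₂, y}` into `{p₁, yb}`, and
every pair that is safe to positive depth meets `{p₁, p₂}`, because otherwise `b` shrinks its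
complement.

Words of length at most three cannot send `Q` below `n - 1` states, which forces each letter to be
a permutation or to merge `p₁` with `p₂` and miss `p₁`, as `b` does. If `a` and `d` preserve
`T = {p₁, p₂, q}`, the safe pairs inside `T` show that every letter preserves `T`, so the image of
`Q` under any word strictly contains the complement of `T`, against the existence of `u`. Following
`{p₁, r}` along short words in `a`, `d` and `b` shows that `T` is preserved unless `d = a`, `r = q`
and `a` has a four-cycle `p₁ → p₂ → q → s → p₁`; then `ba³ba³b` reaches `n - 3` states.
-/

section Maps

variable {Q : Type*} {f : Q → Q} {p₁ p₂ : Q}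

theorem apply_eq_apply_of_injOn_compl (h₁ : Set.InjOn f {p₁}ᶜ) (h₂ : Set.InjOn f {p₂}ᶜ)
    (hf : ¬ f.Injective) : f p₁ = f p₂ := by
  obtain ⟨x, y, hxy, hne⟩ := Function.not_injective_iff.mp hf
  have hp₁ : x = p₁ ∨ y = p₁ := by
    by_contra! h
    exact hne (h₁ h.1 h.2 hxy)
  have hp₂ : x = p₂ ∨ y = p₂ := by
    by_contra! h
    exact hne (h₂ h.1 h.2 hxy)
  grind

theorem apply_apply_eq_of_ncard_orbit_eq_two (hf : f.Injective) {x : Q}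
    (h : {y | ∃ k : ℕ, f^[k] x = y}.ncard = 2) : f (f x) = x := by
  by_contra hne
  have hfx : f x ≠ x := fun e => hne (by rw [e, e])
  have hfin : {y | ∃ k : ℕ, f^[k] x = y}.Finite := Set.finite_of_ncard_ne_zero (by lia)
  have : 2 < {y | ∃ k : ℕ, f^[k] x = y}.ncard :=
    (Set.two_lt_ncard hfin).mpr ⟨x, ⟨0, rfl⟩, f x, ⟨1, rfl⟩, f (f x), ⟨2, rfl⟩, hfx.symm,
      Ne.symm hne, hf.ne hfx.symm⟩
  lia

theorem image_compl_of_bijective [Fintype Q] [DecidableEq Q] (hf : f.Bijective) (S : Finset Q) :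
    Sᶜ.image f = (S.image f)ᶜ := by
  apply Finset.coe_injective
  push_cast
  exact Set.image_compl_eq hf

theorem bijective_of_image_univ_eq [Fintype Q] [DecidableEq Q]
    (h : Finset.univ.image f = Finset.univ) : f.Bijective := by
  refine Finite.surjective_iff_bijective.mp fun y => ?_
  simpa using h.ge (Finset.mem_univ y)

/-- `f` has defect one: it misses exactly `p₁`, and `{p₁, p₂}` is the only pair it identifies. The
encoding says that `f` permutes the states other than `p₁` and sends `p₁` to the image of `p₂`. -/
structure IsMerge (p₁ p₂ : Q) (f : Q → Q) : Prop where
  ne : p₁ ≠ p₂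
  map_eq : f p₁ = f p₂
  bijOn : Set.BijOn f {p₁}ᶜ {p₁}ᶜ

namespace IsMerge

theorem of_injOn [Finite Q] (hp : p₁ ≠ p₂) (heq : f p₁ = f p₂) (hinj : Set.InjOn f {p₁}ᶜ)
    (hmiss : ∀ x, f x ≠ p₁) : IsMerge p₁ p₂ f :=
  ⟨hp, heq, ((Set.toFinite _).injOn_iff_bijOn_of_mapsTo fun x _ => hmiss x).mp hinj⟩

theorem apply_ne (hf : IsMerge p₁ p₂ f) (x : Q) : f x ≠ p₁ := by
  by_cases hx : x = p₁
  · rw [hx, hf.map_eq]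
    exact hf.bijOn.mapsTo hf.ne.symm
  · exact hf.bijOn.mapsTo hx

theorem exists_apply_eq (hf : IsMerge p₁ p₂ f) {y : Q} (hy : y ≠ p₁) : ∃ x, f x = y :=
  let ⟨x, _, hxy⟩ := hf.bijOn.surjOn hy
  ⟨x, hxy⟩

theorem injOn_compl_right (hf : IsMerge p₁ p₂ f) : Set.InjOn f {p₂}ᶜ := by
  have hinj := hf.bijOn.injOn
  have hp := hf.ne
  have heq := hf.map_eq
  intro x hx y hy hxy
  simp only [Set.InjOn, Set.mem_compl_singleton_iff] at hinj hx hy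
  by_cases hx₁ : x = p₁ <;> by_cases hy₁ : y = p₁ <;> grind

theorem eq_of_apply_eq (hf : IsMerge p₁ p₂ f) {x y : Q} (hx₁ : x ≠ p₁) (hx₂ : x ≠ p₂)
    (h : f x = f y) : x = y := by
  by_cases hy : y = p₁
  · exact hf.injOn_compl_right hx₂ (hy ▸ hf.ne) h
  · exact hf.bijOn.injOn hx₁ hy h

theorem bijOn_compl (hf : IsMerge p₁ p₂ f) {x : Q} (hx : x = p₁ ∨ x = p₂) :
    Set.BijOn f {x}ᶜ {p₁}ᶜ := by
  rcases hx with rfl | rfl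
  · exact hf.bijOn
  · refine ⟨fun y _ => hf.apply_ne y, hf.injOn_compl_right, fun y hy => ?_⟩
    obtain ⟨z, rfl⟩ := hf.exists_apply_eq hy
    by_cases hzx : z = x
    · exact ⟨p₁, hf.ne, by rw [hzx, hf.map_eq]⟩
    · exact ⟨z, hzx, rfl⟩

variable [Fintype Q] [DecidableEq Q]

theorem image_compl_insert (hf : IsMerge p₁ p₂ f) {S : Finset Q} {x : Q} (hx : x = p₁ ∨ x = p₂)
    (hxS : x ∉ S) : (insert x S)ᶜ.image f = (insert p₁ (S.image f))ᶜ := by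
  have hbij : Set.BijOn f ({x}ᶜ : Finset Q) ({p₁}ᶜ : Finset Q) := by
    simpa using hf.bijOn_compl hx
  have hcompl (y : Q) (R : Finset Q) : (insert y R)ᶜ = {y}ᶜ \ R := by ext; simp
  have himage : ({x}ᶜ : Finset Q).image f = {p₁}ᶜ := by exact_mod_cast hbij.image_eq
  rw [hcompl, hcompl, Finset.image_sdiff_of_injOn hbij.injOn (by simpa using hxS), himage]

theorem image_compl (hf : IsMerge p₁ p₂ f) {S : Finset Q} (h₁ : p₁ ∉ S) (h₂ : p₂ ∉ S) :
    Sᶜ.image f = (insert p₁ (S.image f))ᶜ := by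
  have hmem : f p₁ ∈ (insert p₁ S)ᶜ.image f := by
    rw [hf.map_eq]
    exact Finset.mem_image_of_mem f (by simpa [h₂] using hf.ne.symm)
  rw [← Finset.insert_compl_insert h₁, Finset.image_insert, Finset.insert_eq_of_mem hmem,
    hf.image_compl_insert (.inl rfl) h₁]

theorem image_univ (hf : IsMerge p₁ p₂ f) : Finset.univ.image f = {p₁}ᶜ := by
  simpa using hf.image_compl (Finset.notMem_empty p₁) (Finset.notMem_empty p₂)

theorem card_image_compl_pair (hf : IsMerge p₁ p₂ f) {x y : Q} (hx₁ : x ≠ p₁) (hx₂ : x ≠ p₂)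
    (hy₁ : y ≠ p₁) (hy₂ : y ≠ p₂) (hxy : x ≠ y) :
    (({x, y}ᶜ : Finset Q).image f).card = Fintype.card Q - 3 := by
  rw [hf.image_compl (by grind) (by grind), Finset.card_compl, Finset.image_insert,
    Finset.image_singleton, Finset.card_eq_three.mpr ⟨p₁, f x, f y, (hf.apply_ne x).symm,
      (hf.apply_ne y).symm, fun h => hxy (hf.eq_of_apply_eq hx₁ hx₂ h), rfl⟩]

end IsMerge

end Maps

section Words

variable {Q A : Type*} [DecidableEq Q] {act : A → Q → Q}

theorem wordImage_append (R : Finset Q) (v w : List A) :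
    wordImage act R (v ++ w) = wordImage act (wordImage act R v) w := by
  induction v generalizing R with
  | nil => rfl
  | cons _ _ ih => exact ih _

theorem wordImage_mono {R R' : Finset Q} (h : R ⊆ R') (w : List A) :
    wordImage act R w ⊆ wordImage act R' w := by
  induction w generalizing R R' with
  | nil => exact h
  | cons _ _ ih => exact ih (Finset.image_subset_image h)

theorem compl_ssubset_wordImage [Fintype Q] {T R : Finset Q}
    (hmaps : ∀ c, ∀ x ∈ T, act c x ∈ T) (hsurj : ∀ c, ∀ y ∉ T, ∃ x, act c x = y)
    (hR : Tᶜ ⊂ R) (w : List A) : Tᶜ ⊂ wordImage act R w := by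
  induction w generalizing R with
  | nil => exact hR
  | cons c _ ih =>
    refine ih ?_
    have hsub : Tᶜ ⊆ R.image (act c) := fun y hy => by
      have hyT := Finset.mem_compl.mp hy
      obtain ⟨z, rfl⟩ := hsurj c y hyT
      have hzT : z ∈ Tᶜ := Finset.mem_compl.mpr fun hz => hyT (hmaps c z hz)
      exact Finset.mem_image_of_mem _ (hR.subset hzT)
    obtain ⟨x, hxR, hxT⟩ := (Finset.ssubset_iff_of_subset hR.subset).mp hR
    refine (Finset.ssubset_iff_of_subset hsub).mpr ⟨act c x, Finset.mem_image_of_mem _ hxR, ?_⟩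
    simp only [Finset.mem_compl, not_not] at hxT ⊢
    exact hmaps c x hxT

/-- Every word of length at most `k` sends `R` to a set of more than `m` states. -/
def StaysAbove (act : A → Q → Q) (m k : ℕ) (R : Finset Q) : Prop :=
  ∀ w : List A, w.length ≤ k → m < (wordImage act R w).card

namespace StaysAbove

variable {m k l : ℕ} {R R' : Finset Q}

theorem mono (h : StaysAbove act m k R) (hlk : l ≤ k) (hR : R ⊆ R') : StaysAbove act m l R' :=
  fun w hw => (h w (hw.trans hlk)).trans_le (Finset.card_le_card (wordImage_mono hR w))

theorem image (h : StaysAbove act m (k + 1) R) (c : A) : StaysAbove act m k (R.image (act c)) :=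
  fun w hw => h (c :: w) (Nat.succ_le_succ hw)

theorem map_compl [Fintype Q] {S : Finset Q} {c : A} (h : StaysAbove act m (k + 1) Sᶜ)
    (hc : (act c).Bijective) : StaysAbove act m k (S.image (act c))ᶜ :=
  image_compl_of_bijective hc S ▸ h.image c

theorem injOn (h : StaysAbove act m (k + 1) R) (hR : R.card ≤ m + 1) (c : A) :
    Set.InjOn (act c) R :=
  Finset.injOn_of_card_image_eq <|
    Finset.card_image_le.antisymm (hR.trans (h.image c [] (Nat.zero_le k)))

theorem injOn_compl_singleton [Fintype Q] {x : Q}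
    (h : StaysAbove act (Fintype.card Q - 2) (k + 1) {x}ᶜ) (c : A) :
    Set.InjOn (act c) {x}ᶜ := by
  have hcard : ({x}ᶜ : Finset Q).card ≤ Fintype.card Q - 2 + 1 := by
    rw [Finset.card_compl, Finset.card_singleton]
    lia
  simpa using h.injOn hcard c

theorem eq_or_eq_of_apply_eq [Fintype Q] {x p₁ p₂ : Q} {b : A}
    (h : StaysAbove act (Fintype.card Q - 2) (k + 1) {x}ᶜ) (hp : p₁ ≠ p₂)
    (hb : act b p₁ = act b p₂) : x = p₁ ∨ x = p₂ := by
  by_contra! hx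
  exact hp (h.injOn_compl_singleton b hx.1.symm hx.2.symm hb)

end StaysAbove

/-- The pair of distinct states `x`, `y` is safe to depth `k`: no word of length at most `k` shrinks
its complement to at most `n - 3` states, where `n` is the number of states. -/
structure SafePair [Fintype Q] (act : A → Q → Q) (k : ℕ) (x y : Q) : Prop where
  ne : x ≠ y
  staysAbove : StaysAbove act (Fintype.card Q - 3) k {x, y}ᶜ

namespace SafePair

variable [Fintype Q] {k l : ℕ} {x y p₁ p₂ : Q} {c : A}

theorem symm (h : SafePair act k x y) : SafePair act k y x :=
  ⟨h.ne.symm, Finset.pair_comm x y ▸ h.staysAbove⟩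

theorem mono (h : SafePair act k x y) (hlk : l ≤ k) : SafePair act l x y :=
  ⟨h.ne, h.staysAbove.mono hlk subset_rfl⟩

theorem map (h : SafePair act (k + 1) x y) (hc : (act c).Bijective) :
    SafePair act k (act c x) (act c y) :=
  ⟨hc.injective.ne h.ne, by simpa using h.staysAbove.map_compl hc⟩

theorem map_merge (h : SafePair act (k + 1) x y) (hc : IsMerge p₁ p₂ (act c))
    (hx : x = p₁ ∨ x = p₂) : SafePair act k p₁ (act c y) where
  ne := (hc.apply_ne y).symm
  staysAbove := by
    have := h.staysAbove.image c
    rwa [hc.image_compl_insert hx (by simpa using h.ne), Finset.image_singleton] at this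

theorem right_eq_or_eq (h : SafePair act (k + 1) x y) (hc : IsMerge p₁ p₂ (act c))
    (hx₁ : x ≠ p₁) (hx₂ : x ≠ p₂) : y = p₁ ∨ y = p₂ := by
  by_contra! hy
  refine (h.staysAbove.image c [] (Nat.zero_le k)).ne' ?_
  exact hc.card_image_compl_pair hx₁ hx₂ hy.1 hy.2 h.ne

end SafePair

end Words

/-- The configuration of the theorem: `b` merges `p₁` and `p₂` and misses `p₁`, and the permutations
`a` and `d` carry `p₁` to `p₂` and `p₂` to the further state `q`. -/
structure MergeChain {Q A : Type*} (act : A → Q → Q) (p₁ p₂ q : Q) (b a d : A) : Prop where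
  merge : IsMerge p₁ p₂ (act b)
  bij_fst : (act a).Bijective
  bij_snd : (act d).Bijective
  map_fst : act a p₁ = p₂
  map_snd : act d p₂ = q
  ne_fst : q ≠ p₁
  ne_snd : q ≠ p₂

namespace MergeChain

variable {Q A : Type*} {act : A → Q → Q} {p₁ p₂ q r x y : Q} {b a d : A}

theorem apply_ne_right (h : MergeChain act p₁ p₂ q b a a) : act a q ≠ p₂ :=
  fun e => h.ne_fst (h.bij_fst.injective (e.trans h.map_fst.symm))

theorem apply_ne_left (h : MergeChain act p₁ p₂ q b a a) (hcycle : act a (act a q) = p₁) :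
    act a q ≠ p₁ := by
  intro e
  rw [e, h.map_fst] at hcycle
  exact h.merge.ne hcycle.symm

variable [Fintype Q] [DecidableEq Q]

section Letters

variable (h : MergeChain act p₁ p₂ q b a d)
  (hup : StaysAbove act (Fintype.card Q - 2) 3 Finset.univ) {c : A}

include h hup

theorem staysAbove_compl_left : StaysAbove act (Fintype.card Q - 2) 2 {p₁}ᶜ :=
  h.merge.image_univ ▸ hup.image b

theorem staysAbove_compl_right : StaysAbove act (Fintype.card Q - 2) 1 {p₂}ᶜ := by
  simpa [h.map_fst] using (h.staysAbove_compl_left hup).map_compl h.bij_fst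

theorem apply_left_of_bijective (hc : (act c).Bijective) : act c p₁ = p₁ ∨ act c p₁ = p₂ := by
  have hc₁ : StaysAbove act (Fintype.card Q - 2) 1 {act c p₁}ᶜ := by
    simpa using (h.staysAbove_compl_left hup).map_compl hc
  exact hc₁.eq_or_eq_of_apply_eq h.merge.ne h.merge.map_eq

theorem eq_left_of_notMem_range (hx : ∀ z, act c z ≠ x) : x = p₁ := by
  have hx₂ : StaysAbove act (Fintype.card Q - 2) 2 {x}ᶜ :=
    (hup.image c).mono le_rfl fun y hy => by
      obtain ⟨z, -, rfl⟩ := Finset.mem_image.mp hy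
      simpa using hx z
  refine (hx₂.eq_or_eq_of_apply_eq h.merge.ne h.merge.map_eq).resolve_right ?_
  rintro rfl
  have hq : StaysAbove act (Fintype.card Q - 2) 1 {q}ᶜ := by
    simpa [h.map_snd] using hx₂.map_compl h.bij_snd
  exact (hq.eq_or_eq_of_apply_eq h.merge.ne h.merge.map_eq).elim h.ne_fst h.ne_snd

theorem isMerge_of_not_bijective (hc : ¬ (act c).Bijective) : IsMerge p₁ p₂ (act c) := by
  have hinj₁ := (h.staysAbove_compl_left hup).injOn_compl_singleton c
  have hinj₂ := (h.staysAbove_compl_right hup).injOn_compl_singleton c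
  have heq := apply_eq_apply_of_injOn_compl hinj₁ hinj₂ (mt Finite.injective_iff_bijective.mp hc)
  obtain ⟨m, hm⟩ : ∃ m, ∀ z, act c z ≠ m := by
    simpa [Function.Surjective] using mt Finite.surjective_iff_bijective.mp hc
  exact .of_injOn h.merge.ne heq hinj₁ (h.eq_left_of_notMem_range hup hm ▸ hm)

end Letters

section Triple

variable (h : MergeChain act p₁ p₂ q b a d)
  (ha : ∀ z, act a z ∈ ({p₁, p₂, q} : Finset Q) → z ∈ ({p₁, p₂, q} : Finset Q))
  (hd : ∀ z, act d z ∈ ({p₁, p₂, q} : Finset Q) → z ∈ ({p₁, p₂, q} : Finset Q))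

include h

theorem eq_or_eq_of_safePair {k : ℕ} (hs : SafePair act (k + 1) q y) : y = p₁ ∨ y = p₂ :=
  hs.right_eq_or_eq h.merge h.ne_fst h.ne_snd

include ha hd

-- The words `ad`, `d` and the empty word carry `p₁`, `p₂` and `q` respectively to `q`.
theorem mem_triple_of_safePair (hs : SafePair act 3 x y) (hx : x ∈ ({p₁, p₂, q} : Finset Q)) :
    y ∈ ({p₁, p₂, q} : Finset Q) := by
  have of_q {k : ℕ} {z : Q} (hz : SafePair act (k + 1) q z) : z ∈ ({p₁, p₂, q} : Finset Q) := by
    rcases h.eq_or_eq_of_safePair hz with rfl | rfl <;> simp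
  have of_p₂ {k : ℕ} {z : Q} (hz : SafePair act (k + 2) p₂ z) : z ∈ ({p₁, p₂, q} : Finset Q) :=
    hd z (of_q (h.map_snd ▸ hz.map h.bij_snd))
  simp only [Finset.mem_insert, Finset.mem_singleton] at hx
  rcases hx with rfl | rfl | rfl
  · exact ha y (of_p₂ (h.map_fst ▸ hs.map h.bij_fst))
  · exact of_p₂ hs
  · exact of_q hs

variable (hup : StaysAbove act (Fintype.card Q - 2) 3 Finset.univ)
  (hp : SafePair act 4 p₁ p₂) (hq : SafePair act 4 p₁ q ∨ SafePair act 4 p₂ q)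

include hup hp hq

theorem apply_mem_triple (c : A) (hx : x ∈ ({p₁, p₂, q} : Finset Q)) :
    act c x ∈ ({p₁, p₂, q} : Finset Q) := by
  have mem {y z : Q} := h.mem_triple_of_safePair ha hd (x := y) (y := z)
  have hmem : act c p₁ ∈ ({p₁, p₂, q} : Finset Q) ∧ act c p₂ ∈ ({p₁, p₂, q} : Finset Q) ∧
      act c q ∈ ({p₁, p₂, q} : Finset Q) := by
    by_cases hc : (act c).Bijective
    · have h₁ : act c p₁ ∈ ({p₁, p₂, q} : Finset Q) := by
        rcases h.apply_left_of_bijective hup hc with e | e <;> simp [e]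
      have h₂ := mem (hp.map hc) h₁
      refine ⟨h₁, h₂, hq.elim (fun hq => ?_) (fun hq => ?_)⟩
      · exact mem (hq.map hc) h₁
      · exact mem (hq.map hc) h₂
    · have hc := h.isMerge_of_not_bijective hup hc
      have mem_of_safe {z : Q} (hz : SafePair act 3 p₁ (act c z)) :=
        mem hz (Finset.mem_insert_self _ _)
      have h₂ := mem_of_safe (hp.map_merge hc (.inl rfl))
      refine ⟨hc.map_eq ▸ h₂, h₂, hq.elim (fun hq => ?_) (fun hq => ?_)⟩
      · exact mem_of_safe (hq.map_merge hc (.inl rfl))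
      · exact mem_of_safe (hq.map_merge hc (.inr rfl))
  simp only [Finset.mem_insert, Finset.mem_singleton] at hx
  rcases hx with rfl | rfl | rfl
  exacts [hmem.1, hmem.2.1, hmem.2.2]

theorem lt_card_wordImage_univ (w : List A) :
    Fintype.card Q - 3 < (wordImage act Finset.univ w).card := by
  have hsurj (c : A) (y : Q) (hy : y ∉ ({p₁, p₂, q} : Finset Q)) : ∃ x, act c x = y := by
    by_cases hc : (act c).Bijective
    · exact hc.surjective y
    · exact (h.isMerge_of_not_bijective hup hc).exists_apply_eq (by grind)
  have hssub : ({p₁, p₂, q} : Finset Q)ᶜ ⊂ Finset.univ :=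
    Finset.ssubset_univ_iff.mpr ((Finset.compl_ne_univ_iff_nonempty _).mpr ⟨p₁, by simp⟩)
  have hcard := Finset.card_lt_card <| compl_ssubset_wordImage
    (fun c _ => h.apply_mem_triple ha hd hup hp hq c) hsurj hssub w
  have hthree : ({p₁, p₂, q} : Finset Q).card ≤ 3 := Finset.card_le_three
  rw [Finset.card_compl] at hcard
  lia

end Triple

section EqualPermutations

variable (h : MergeChain act p₁ p₂ q b a a)

include h

theorem cycle_of_safePair (hs : SafePair act 5 p₁ r) :
    act a q = p₁ ∨ act a (act a q) = p₁ ∧ r = q := by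
  have hbij := h.bij_fst
  have hinj := hbij.injective
  have safe₂ : SafePair act 3 q (act a (act a r)) := by
    simpa only [h.map_fst, h.map_snd] using (hs.map hbij).map hbij
  rcases h.eq_or_eq_of_safePair safe₂ with e | e
  · have safe₄ : SafePair act 1 q (act a (act a q)) := by
      simpa only [e, h.map_fst, h.map_snd] using ((safe₂.map hbij).map hbij).symm
    refine (h.eq_or_eq_of_safePair safe₄).symm.imp (fun hq => ?_) fun hq => ⟨hq, ?_⟩
    · exact hinj (hq.trans h.map_fst.symm)
    · exact hinj (hinj (e.trans hq.symm))
  · have safe₃ : SafePair act 2 q (act a q) := by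
      simpa only [e, h.map_snd] using (safe₂.map hbij).symm
    exact .inl ((h.eq_or_eq_of_safePair safe₃).resolve_right h.apply_ne_right)

theorem lt_card_wordImage_of_cycle (hup : StaysAbove act (Fintype.card Q - 2) 3 Finset.univ)
    (hs : SafePair act 5 p₁ r) (hq : act a q = p₁) (w : List A) :
    Fintype.card Q - 3 < (wordImage act Finset.univ w).card := by
  have hinj := h.bij_fst.injective
  have hfst := h.map_fst
  have hsnd := h.map_snd
  have ha : ∀ z, act a z ∈ ({p₁, p₂, q} : Finset Q) → z ∈ ({p₁, p₂, q} : Finset Q) := by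
    grind [Function.Injective]
  have hsa : SafePair act 4 p₂ (act a r) := hfst ▸ hs.map h.bij_fst
  have hr : r = p₂ ∨ r = q := by
    simpa [hs.ne.symm] using h.mem_triple_of_safePair ha ha (hs.mono (by decide)) (by simp)
  rcases hr with rfl | rfl
  · exact h.lt_card_wordImage_univ ha ha hup (hs.mono (by decide)) (.inr (hsnd ▸ hsa)) w
  · exact h.lt_card_wordImage_univ ha ha hup (hq ▸ hsa.symm) (.inl (hs.mono (by decide))) w

variable (hs : SafePair act 5 p₁ q) (hcycle : act a (act a q) = p₁)

include hcycle hs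

theorem merge_apply_ne_right : act b (act a q) ≠ p₂ := by
  intro e
  have hsa : SafePair act 4 p₂ (act a q) := h.map_fst ▸ hs.map h.bij_fst
  have hp : SafePair act 3 p₁ p₂ := e ▸ hsa.map_merge h.merge (.inr rfl)
  have hqa : SafePair act 1 q (act a q) := by
    simpa only [h.map_fst, h.map_snd] using (hp.map h.bij_fst).map h.bij_fst
  exact (h.eq_or_eq_of_safePair hqa).elim (h.apply_ne_left hcycle) h.apply_ne_right

theorem card_wordImage_of_fourCycle (hq : act b q = q) :
    (wordImage act Finset.univ [b, a, a, a, b, a, a, a, b]).card = Fintype.card Q - 3 := by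
  have hinj := h.bij_fst.injective.iterate 3
  have ha₁ : (act a)^[3] p₁ = act a q := by simp [h.map_fst, h.map_snd]
  have ha₂ : (act a)^[3] p₂ = p₁ := by simp [h.map_snd, hcycle]
  have haq : (act a)^[3] q = p₂ := by simp [hcycle, h.map_fst]
  have image_cube (S : Finset Q) :
      ((Sᶜ.image (act a)).image (act a)).image (act a) = (S.image (act a)^[3])ᶜ := by
    rw [← image_compl_of_bijective (h.bij_fst.iterate 3), Finset.image_image, Finset.image_image]
    rfl
  have hq₁ := h.apply_ne_left hcycle
  have hq₂ := h.apply_ne_right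
  have image_b : ({act a q}ᶜ : Finset Q).image (act b) = {p₁, act b (act a q)}ᶜ := by
    rw [h.merge.image_compl (by simpa using hq₁.symm) (by simpa using hq₂.symm),
      Finset.image_singleton]
  have hfix : act b (act a q) ≠ q := fun e => by
    have haq_eq : act a q = q := h.merge.eq_of_apply_eq hq₁ hq₂ (e.trans hq.symm)
    exact h.ne_snd (h.bij_fst.injective (haq_eq.trans h.map_snd.symm))
  simp only [wordImage, h.merge.image_univ, image_cube, Finset.image_singleton, ha₁, image_b,
    Finset.image_insert]
  refine h.merge.card_image_compl_pair hq₁ hq₂ (fun e => ?_) (fun e => ?_) fun e => ?_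
  · exact h.merge_apply_ne_right hs hcycle (hinj (e.trans ha₂.symm))
  · exact hfix (hinj (e.trans haq.symm))
  · exact h.merge.apply_ne _ (hinj (e.symm.trans ha₁.symm))

end EqualPermutations

section SwapAndFix

variable (h : MergeChain act p₁ p₂ q b a d) (ha : act a p₂ = p₁) (hd : act d p₁ = p₁)

include h ha hd

theorem snd_fst_apply_of_safePair (hs : SafePair act 3 p₁ x) (hx : x ≠ p₂) :
    act d (act a x) = p₂ := by
  have hsafe : SafePair act 1 q (act d (act a x)) := by
    simpa only [h.map_fst, h.map_snd] using (hs.map h.bij_fst).map h.bij_snd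
  refine (h.eq_or_eq_of_safePair hsafe).resolve_left fun e => hx ?_
  exact h.bij_fst.injective ((h.bij_snd.injective (e.trans hd.symm)).trans ha.symm)

theorem snd_apply_of_safePair (hs : SafePair act 4 p₁ x) (hx : x ≠ p₂) : act d q = p₂ := by
  have hqp : SafePair act 2 q p₂ := by
    simpa only [h.map_fst, h.map_snd, h.snd_fst_apply_of_safePair ha hd (hs.mono (by decide)) hx]
      using (hs.map h.bij_fst).map h.bij_snd
  have hqd : SafePair act 1 q (act d q) := by
    simpa only [h.map_snd] using (hqp.map h.bij_snd).symm
  exact (h.eq_or_eq_of_safePair hqd).resolve_left fun e =>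
    h.ne_fst (h.bij_snd.injective (e.trans hd.symm))

theorem fst_apply_of_safePair (hdq : act d q = p₂) (hs : SafePair act 3 p₁ x) (hx : x ≠ p₂) :
    act a x = q :=
  h.bij_snd.injective ((h.snd_fst_apply_of_safePair ha hd hs hx).trans hdq.symm)

theorem swap_and_fix_of_safePair (hs : SafePair act 5 p₁ (act b q)) :
    act d q = p₂ ∧ act a q = q := by
  have safe_q {k : ℕ} {x : Q} (hx : SafePair act (k + 1) p₁ x) (e : x = p₂) :
      SafePair act k p₁ q := by
    simpa only [e, hd, h.map_snd] using hx.map h.bij_snd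
  by_cases hr : act b q = p₂
  · have hq := safe_q hs hr
    have hdq := h.snd_apply_of_safePair ha hd hq h.ne_snd
    exact ⟨hdq, h.fst_apply_of_safePair ha hd hdq (hq.mono (by decide)) h.ne_snd⟩
  have hdq := h.snd_apply_of_safePair ha hd (hs.mono (by decide)) hr
  have har := h.fst_apply_of_safePair ha hd hdq (hs.mono (by decide)) hr
  suffices hq : SafePair act 3 p₁ q from
    ⟨hdq, h.fst_apply_of_safePair ha hd hdq hq h.ne_snd⟩
  have hsb : SafePair act 4 p₁ (act b (act b q)) := hs.map_merge h.merge (.inl rfl)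
  by_cases hbr : act b (act b q) = p₂
  · exact safe_q hsb hbr
  · have habr := h.fst_apply_of_safePair ha hd hdq (hsb.mono (by decide)) hbr
    have hbr_eq : act b q = act b (act b q) := h.bij_fst.injective (har.trans habr.symm)
    rw [h.merge.eq_of_apply_eq h.ne_fst h.ne_snd hbr_eq]
    exact hs.mono (by decide)

theorem lt_card_wordImage_of_swap (hup : StaysAbove act (Fintype.card Q - 2) 3 Finset.univ)
    (hs : SafePair act 5 p₁ (act b q)) (w : List A) :
    Fintype.card Q - 3 < (wordImage act Finset.univ w).card := by
  obtain ⟨hdq, haq⟩ := h.swap_and_fix_of_safePair ha hd hs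
  have hinj_a := h.bij_fst.injective
  have hinj_d := h.bij_snd.injective
  have hfst := h.map_fst
  have hsnd := h.map_snd
  have ha' : ∀ z, act a z ∈ ({p₁, p₂, q} : Finset Q) → z ∈ ({p₁, p₂, q} : Finset Q) := by
    grind [Function.Injective]
  have hd' : ∀ z, act d z ∈ ({p₁, p₂, q} : Finset Q) → z ∈ ({p₁, p₂, q} : Finset Q) := by
    grind [Function.Injective]
  have hsd : SafePair act 4 p₁ (act d (act b q)) := by simpa only [hd] using hs.map h.bij_snd
  have hr : act b q = p₂ ∨ act b q = q := by
    simpa [hs.ne.symm] using h.mem_triple_of_safePair ha' hd' (hs.mono (by decide)) (by simp)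
  rcases hr with hr | hr <;> rw [hr] at hs hsd
  · exact h.lt_card_wordImage_univ ha' hd' hup (hs.mono (by decide)) (.inl (hsnd ▸ hsd)) w
  · exact h.lt_card_wordImage_univ ha' hd' hup (hdq ▸ hsd) (.inl (hs.mono (by decide))) w

end SwapAndFix

end MergeChain

theorem stmt_15 {Q A : Type*} [Fintype Q] [DecidableEq Q] (act : A → Q → Q)
    (hH1 : ∃ w : List A, (wordImage act Finset.univ w).card ≤ Fintype.card Q - 2)
    (hH2 : ∀ w : List A, w.length ≤ 3 →
      Fintype.card Q - 2 < (wordImage act Finset.univ w).card)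
    (hu : ∃ u : List A, (wordImage act Finset.univ u).card ≤ Fintype.card Q - 3)
    (p₁ p₂ : Q) (hp : p₁ ≠ p₂) (b a d : A) (q : Q) (hq₁ : q ≠ p₁) (hq₂ : q ≠ p₂)
    (hb : Finset.univ.image (act b) = Finset.univ \ {p₁})
    (hb12 : act b p₁ = act b p₂)
    (ha : Finset.univ.image (act a) = Finset.univ)
    (ha1 : act a p₁ = p₂)
    (hqb : act b q ≠ p₁)
    (hbad : wordImage act Finset.univ [b, a, d] = Finset.univ \ {q})
    (hbadb : wordImage act Finset.univ [b, a, d, b] = Finset.univ \ {p₁, act b q})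
    (hX : (3 ≤ Set.ncard {x : Q | ∃ k : ℕ, (act a)^[k] p₁ = x} ∧ d = a) ∨
      (Set.ncard {x : Q | ∃ k : ℕ, (act a)^[k] p₁ = x} = 2 ∧
        Finset.univ.image (act d) = Finset.univ ∧ act d p₁ = p₁ ∧
        ∃ p₃ : Q, p₃ ≠ p₁ ∧ p₃ ≠ p₂ ∧ act d p₃ = p₂))
    (hno : ¬ ∃ v : List A, v.length ≤ 5 ∧
      (wordImage act Finset.univ ([b, a, d, b] ++ v)).card ≤ Fintype.card Q - 3) :
    (wordImage act Finset.univ [b, a, a, a, b, a, a, a, b]).card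
      = Fintype.card Q - 3 := by
  simp only [← Finset.compl_eq_univ_sdiff] at hb hbad hbadb
  have hup : StaysAbove act (Fintype.card Q - 2) 3 Finset.univ := hH2
  have hinj_b : Set.InjOn (act b) {p₁}ᶜ := (hb ▸ hup.image b).injOn_compl_singleton b
  have hmiss (x : Q) : act b x ≠ p₁ := by
    simpa [hb] using Finset.mem_image_of_mem (act b) (Finset.mem_univ x)
  have ha_bij := bijective_of_image_univ_eq ha
  have hd_bij : (act d).Bijective := by
    rcases hX with ⟨-, rfl⟩ | ⟨-, hd, -⟩
    exacts [ha_bij, bijective_of_image_univ_eq hd]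
  have hd₂ : act d p₂ = q := by
    simpa [wordImage, hb, image_compl_of_bijective ha_bij, image_compl_of_bijective hd_bij, ha1]
      using hbad
  have hchain : MergeChain act p₁ p₂ q b a d :=
    ⟨.of_injOn hp hb12 hinj_b hmiss, ha_bij, hd_bij, ha1, hd₂, hq₁, hq₂⟩
  have hsafe : SafePair act 5 p₁ (act b q) :=
    ⟨hqb.symm, fun v hv => not_le.mp fun hle =>
      hno ⟨v, hv, by rwa [wordImage_append, hbadb]⟩⟩
  obtain ⟨u, hu⟩ := hu
  rcases hX with ⟨-, rfl⟩ | ⟨horbit, -, hd₁, -⟩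
  · rcases hchain.cycle_of_safePair hsafe with hcycle | ⟨hcycle, hbq⟩
    · exact absurd hu (hchain.lt_card_wordImage_of_cycle hup hsafe hcycle u).not_ge
    · exact hchain.card_wordImage_of_fourCycle (hbq ▸ hsafe) hcycle hbq
  · have ha₂ : act a p₂ = p₁ := by
      simpa [ha1] using apply_apply_eq_of_ncard_orbit_eq_two ha_bij.injective horbit
    exact absurd hu (hchain.lt_card_wordImage_of_swap ha₂ hd₁ hup hsafe u).not_ge
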